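/- Fix real constants c > 1, δ > 0, Δ ≥ δ, and r > 0 with r < 7/(40c² + 8) and r ≤ c⁻³·min{1/11, δ/5}. Consider any x₀ = (x₁(0), x₂(0)) ∈ ℝ², any Lebesgue measurable locally bounded inputs d₁ : [0, ∞) → [δ, Δ], d₂ : [0, ∞) → [−1, 1], d̃ : [0, ∞) → [0, ∞), v : [0, ∞) → ℝ, any sequence of sampling times τ₀ = 0, τ_{i+1} = τ_i + r·exp(−d̃(τ_i)), and any function x = (x₁, x₂) : [0, ∞) → ℝ² with x(0) = x₀ which is absolutely continuous on each interval [τ_i, τ_{i+1}] and satisfies, for almost every t ∈ [τ_i, τ_{i+1}), ẋ₁(t) = −2x₁(t) − d₁(t)x₁(t)³ + x₂(t) and ẋ₂(t) = d₂(t)x₂(t)² − x₂(t)³ − 2x₂(τ_i) + v(t). Then there exists a function σ of class KL, depending only on r, δ, Δ, c (not on x₀, d₁, d₂, d̃, v), such that |x(t)| ≤ σ(|x₀|, t) + 2 · sup_{0 ≤ τ ≤ t} |v(τ)| for all t ≥ 0. -/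

import Mathlib

/-- A function `γ : [0,∞) → [0,∞)` is of class `K` if it is continuous,
strictly increasing and `γ 0 = 0`. -/
def ClassK (γ : ℝ → ℝ) : Prop :=
  ContinuousOn γ (Set.Ici 0) ∧ StrictMonoOn γ (Set.Ici 0) ∧ γ 0 = 0

/-- A function `σ : [0,∞) × [0,∞) → [0,∞)` is of class `KL` if it is continuous,
for each fixed `t ≥ 0` the map `s ↦ σ s t` is of class `K`, and for each fixed `s ≥ 0`
the map `t ↦ σ s t` is non-increasing with `σ s t → 0` as `t → +∞`. -/
def ClassKL (σ : ℝ → ℝ → ℝ) : Prop :=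
  ContinuousOn (fun p : ℝ × ℝ => σ p.1 p.2) (Set.Ici 0 ×ˢ Set.Ici 0) ∧
  (∀ t ∈ Set.Ici (0:ℝ), ClassK (fun s => σ s t)) ∧
  (∀ s ∈ Set.Ici (0:ℝ), AntitoneOn (σ s) (Set.Ici 0) ∧
    Filter.Tendsto (σ s) Filter.atTop (nhds 0)) ∧
  (∀ s ∈ Set.Ici (0:ℝ), ∀ t ∈ Set.Ici (0:ℝ), 0 ≤ σ s t)

/-- Absolute continuity of `y` on the interval `[a, b]`. -/
def AbsContOn {E : Type*} [NormedAddCommGroup E] (y : ℝ → E) (a b : ℝ) : Prop :=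
  ∀ ε > (0:ℝ), ∃ δ > (0:ℝ), ∀ n : ℕ, ∀ s t : ℕ → ℝ,
    (∀ i < n, a ≤ s i ∧ s i ≤ t i ∧ t i ≤ b) →
    (∀ i, i + 1 < n → t i ≤ s (i + 1)) →
    (∑ i ∈ Finset.range n, (t i - s i)) < δ →
    (∑ i ∈ Finset.range n, ‖y (t i) - y (s i)‖) < ε

/-!
The equation for `x₂` does not involve `x₁`. Since `d y² - y³ ≤ y / 4` for `y ≥ 0` and `d ≤ 1`,
comparison with affine functions on a sampling interval of length at most `1 / 4` bounds `|x₂ t|` by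
the convex combination of `|x₂ (τ i)|` and `S = sup |v|` in which `S` has weight
`3 / 2 * (t - τ i)`, so that `|x₂ t| ≤ exp (-t) * |x₂ 0| + S`. In the equation for `x₁` the cubic
term is dissipative, the damping rate is `2` and the input is `x₂`; hence
`|x₁ t| ≤ exp (-t) * (|x₁ 0| + |x₂ 0|) + S / 2`. Adding the two bounds gives gain `3 / 2`.
-/

open Set Filter MeasureTheory Function

theorem exists_equiv_fin_forall_lt_le {ι α : Type*} [Fintype ι] [LinearOrder α] {s t : ι → α}
    (hst : ∀ i, s i < t i) (hdisj : Pairwise (Disjoint on fun i ↦ Ioc (s i) (t i))) :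
    ∃ e : Fin (Fintype.card ι) ≃ ι, ∀ i j, i < j → t (e i) ≤ s (e j) := by
  let e₀ := (Fintype.equivFin ι).symm
  let e := (Tuple.sort (t ∘ e₀)).trans e₀
  refine ⟨e, fun i j hij ↦ ?_⟩
  have hmono : t (e i) ≤ t (e j) := Tuple.monotone_sort (t ∘ e₀) hij.le
  have hsep := Ioc_disjoint_Ioc.1 (hdisj (e.injective.ne hij.ne))
  rw [min_eq_left hmono] at hsep
  exact (le_max_iff.1 hsep).resolve_left (hst _).not_ge

theorem norm_sub_max_min {α E : Type*} [LinearOrder α] [SeminormedAddCommGroup E] (f : α → E)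
    (p q : α) : ‖f (max p q) - f (min p q)‖ = dist (f p) (f q) := by
  rcases le_total p q with h | h
  · rw [max_eq_right h, min_eq_left h, dist_eq_norm_sub']
  · rw [max_eq_left h, min_eq_right h, dist_eq_norm_sub]

namespace AbsContOn

variable {E F : Type*} [NormedAddCommGroup E] [NormedAddCommGroup F] {y : ℝ → E} {a b : ℝ}

theorem mono {a' b' : ℝ} (h : AbsContOn y a b) (ha : a ≤ a') (hb : b' ≤ b) :
    AbsContOn y a' b' := by
  intro ε hε
  obtain ⟨δ, hδ, H⟩ := h ε hε
  refine ⟨δ, hδ, fun n s t hst ↦ H n s t fun i hi ↦ ?_⟩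
  obtain ⟨has, hst, htb⟩ := hst i hi
  exact ⟨ha.trans has, hst, htb.trans hb⟩

theorem of_norm_sub_le {z : ℝ → F} (h : AbsContOn y a b)
    (hz : ∀ s t, ‖z t - z s‖ ≤ ‖y t - y s‖) : AbsContOn z a b := by
  intro ε hε
  obtain ⟨δ, hδ, H⟩ := h ε hε
  exact ⟨δ, hδ, fun n s t hst hord hlen ↦
    (Finset.sum_le_sum fun i _ ↦ hz (s i) (t i)).trans_lt (H n s t hst hord hlen)⟩

theorem fst {f : ℝ → E} {g : ℝ → F} (h : AbsContOn (fun t ↦ (f t, g t)) a b) :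
    AbsContOn f a b :=
  h.of_norm_sub_le fun s t ↦ norm_fst_le ((f t, g t) - (f s, g s))

theorem snd {f : ℝ → E} {g : ℝ → F} (h : AbsContOn (fun t ↦ (f t, g t)) a b) :
    AbsContOn g a b :=
  h.of_norm_sub_le fun s t ↦ norm_snd_le ((f t, g t) - (f s, g s))

theorem exists_forall_pairwise_disjoint (h : AbsContOn y a b) {ε : ℝ} (hε : 0 < ε) :
    ∃ δ > 0, ∀ {ι : Type*} [Fintype ι] (s t : ι → ℝ), (∀ i, a ≤ s i ∧ s i < t i ∧ t i ≤ b) →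
      Pairwise (Disjoint on fun i ↦ Ioc (s i) (t i)) → ∑ i, (t i - s i) < δ →
      ∑ i, ‖y (t i) - y (s i)‖ < ε := by
  obtain ⟨δ, hδ, H⟩ := h ε hε
  refine ⟨δ, hδ, fun {ι} _ s t hst hdisj hlen ↦ ?_⟩
  obtain ⟨e, he⟩ := exists_equiv_fin_forall_lt_le (fun i ↦ (hst i).2.1) hdisj
  have hext (f : ι → ℝ) (i : Fin (Fintype.card ι)) : extend Fin.val (f ∘ e) 0 i = f (e i) :=
    Fin.val_injective.extend_apply _ _ i
  have H' := H (Fintype.card ι) (extend Fin.val (s ∘ e) 0) (extend Fin.val (t ∘ e) 0)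
  simp only [Finset.sum_range, hext, e.sum_comp fun i ↦ t i - s i,
    e.sum_comp fun i ↦ ‖y (t i) - y (s i)‖] at H'
  refine H' (fun i hi ↦ ?_) (fun i hi ↦ ?_) hlen
  · rw [hext s ⟨i, hi⟩, hext t ⟨i, hi⟩]
    obtain ⟨has, hst, htb⟩ := hst (e ⟨i, hi⟩)
    exact ⟨has, hst.le, htb⟩
  · rw [hext t ⟨i, i.lt_succ_self.trans hi⟩, hext s ⟨i + 1, hi⟩]
    exact he _ _ (Fin.mk_lt_mk.2 i.lt_succ_self)

theorem absolutelyContinuousOnInterval (h : AbsContOn y a b) (hab : a ≤ b) :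
    AbsolutelyContinuousOnInterval y a b := by
  rw [absolutelyContinuousOnInterval_iff]
  intro ε hε
  obtain ⟨δ, hδ, H⟩ := h.exists_forall_pairwise_disjoint hε
  refine ⟨δ, hδ, fun ⟨n, I⟩ ⟨hmem, hdisj⟩ hlen ↦ ?_⟩
  rw [uIcc_of_le hab] at hmem
  -- An interval `I i` may have reversed or equal endpoints; those with equal ones are dropped.
  let N := {i ∈ Finset.range n | (I i).1 ≠ (I i).2}
  have hN (i : N) : (i : ℕ) ∈ Finset.range n ∧ (I i).1 ≠ (I i).2 := Finset.mem_filter.1 i.2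
  have hsum (φ : ℕ → ℝ) (hφ : ∀ i, (I i).1 = (I i).2 → φ i = 0) :
      ∑ i : N, φ i = ∑ i ∈ Finset.range n, φ i :=
    (N.sum_coe_sort φ).trans <| Finset.sum_filter_of_ne fun i _ ↦ mt (hφ i)
  have hy : ∑ i : N, ‖y (max (I i).1 (I i).2) - y (min (I i).1 (I i).2)‖ < ε := by
    refine H _ _ (fun i ↦ ?_) (fun i j hij ↦ ?_) ?_
    · obtain ⟨hi₁, hi₂⟩ := hmem i (hN i).1
      exact ⟨le_min hi₁.1 hi₂.1, min_lt_max.2 (hN i).2, max_le hi₁.2 hi₂.2⟩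
    · exact hdisj (hN i).1 (hN j).1 (Subtype.coe_injective.ne hij)
    · simp only [max_sub_min_eq_abs', ← Real.dist_eq]
      rwa [hsum (fun i ↦ dist (I i).1 (I i).2) fun i hi ↦ by rw [hi, dist_self]]
  simp only [norm_sub_max_min] at hy
  rwa [hsum (fun i ↦ dist (y (I i).1) (y (I i).2)) fun i hi ↦ by rw [hi, dist_self]] at hy

end AbsContOn

section Comparison

variable {f g : ℝ → ℝ} {a b K : ℝ}

theorem nonpos_of_ae_deriv_nonpos (hf : AbsolutelyContinuousOnInterval f a b) (ha : f a ≤ 0)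
    (hderiv : ∀ᵐ t, t ∈ Ioo a b → 0 < f t → deriv f t ≤ 0) : ∀ t ∈ Icc a b, f t ≤ 0 := by
  intro t ht
  by_contra! hpos
  have hsub : Icc a t ⊆ uIcc a b := (Icc_subset_Icc_right ht.2).trans Icc_subset_uIcc
  have hcont : ContinuousOn f (Icc a t) := hf.continuousOn.mono hsub
  -- `s` is the last time before `t` at which `f ≤ 0`.
  obtain ⟨s, ⟨hs, hfs⟩, hmax⟩ :=
    (isCompact_Icc.of_isClosed_subset
      (hcont.preimage_isClosed_of_isClosed isClosed_Icc isClosed_Iic)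
      inter_subset_left).exists_isGreatest ⟨a, left_mem_Icc.2 ht.1, ha⟩
  have hpos_after : ∀ u ∈ Ioc s t, 0 < f u := fun u hu ↦
    not_le.1 fun hle ↦ hu.1.not_ge (hmax ⟨⟨hs.1.trans hu.1.le, hu.2⟩, hle⟩)
  have hftc : ∫ u in s..t, deriv f u = f t - f s :=
    (hf.mono ((uIcc_subset_Icc hs (right_mem_Icc.2 ht.1)).trans hsub)).integral_deriv_eq_sub
  have hint : ∫ u in s..t, deriv f u ≤ 0 := by
    rw [intervalIntegral.integral_of_le hs.2, integral_Ioc_eq_integral_Ioo]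
    refine setIntegral_nonpos_of_ae_restrict ((ae_restrict_iff' measurableSet_Ioo).2 ?_)
    filter_upwards [hderiv] with u hu hmem
    exact hu ⟨hs.1.trans_lt hmem.1, hmem.2.trans_le ht.2⟩ (hpos_after u (Ioo_subset_Ioc_self hmem))
  have : f s ≤ 0 := hfs
  linarith

theorem nonpos_of_ae_deriv_le_mul (hf : AbsolutelyContinuousOnInterval f a b) (ha : f a ≤ 0)
    (hderiv : ∀ᵐ t, t ∈ Ioo a b → 0 < f t → deriv f t ≤ K * f t) : ∀ t ∈ Icc a b, f t ≤ 0 := by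
  intro t ht
  have hexp (u : ℝ) : HasDerivAt (fun u ↦ Real.exp (-K * u)) (Real.exp (-K * u) * -K) u :=
    (hasDerivAt_const_mul (-K)).exp
  have hexpAC : AbsolutelyContinuousOnInterval (fun u ↦ Real.exp (-K * u)) a b :=
    ContDiffOn.absolutelyContinuousOnInterval (by fun_prop)
  refine nonpos_of_mul_nonpos_right
    (nonpos_of_ae_deriv_nonpos (hexpAC.fun_mul hf) ?_ ?_ t ht) (Real.exp_pos _)
  · exact mul_nonpos_of_nonneg_of_nonpos (Real.exp_pos _).le ha
  filter_upwards [hderiv, hf.ae_differentiableAt] with u hu hdiff hmem hpos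
  have hdu := (hdiff (Ioo_subset_Icc_self.trans Icc_subset_uIcc hmem)).hasDerivAt
  rw [((hexp u).fun_mul hdu).deriv]
  have := hu hmem (pos_of_mul_pos_right hpos (Real.exp_pos _).le)
  nlinarith [Real.exp_pos (-K * u)]

theorem le_of_ae_deriv_le (hf : AbsolutelyContinuousOnInterval f a b)
    (hg : AbsolutelyContinuousOnInterval g a b) (ha : f a ≤ g a)
    (hderiv : ∀ᵐ t, t ∈ Ioo a b → g t < f t → deriv f t ≤ deriv g t + K * (f t - g t)) :
    ∀ t ∈ Icc a b, f t ≤ g t := by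
  intro t ht
  refine sub_nonpos.1 (nonpos_of_ae_deriv_le_mul (K := K) (hf.fun_sub hg) (sub_nonpos.2 ha) ?_ t ht)
  filter_upwards [hderiv, hf.ae_differentiableAt, hg.ae_differentiableAt]
    with u hu hfu hgu hmem hpos
  have hmem' : u ∈ uIcc a b := Ioo_subset_Icc_self.trans Icc_subset_uIcc hmem
  rw [deriv_fun_sub (hfu hmem') (hgu hmem')]
  linarith [hu hmem (sub_pos.1 hpos)]

end Comparison

theorem ClassK.nonneg {γ : ℝ → ℝ} (hγ : ClassK γ) {s : ℝ} (hs : 0 ≤ s) : 0 ≤ γ s :=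
  hγ.2.2 ▸ hγ.2.1.monotoneOn self_mem_Ici hs hs

theorem ClassK.classKL_mul {γ ρ : ℝ → ℝ} (hγ : ClassK γ) (hcont : ContinuousOn ρ (Ici 0))
    (hpos : ∀ t ∈ Ici 0, 0 < ρ t) (hanti : AntitoneOn ρ (Ici 0)) (hlim : Tendsto ρ atTop (nhds 0)) :
    ClassKL fun s t ↦ γ s * ρ t := by
  refine ⟨(hγ.1.comp continuousOn_fst fun _ hp ↦ hp.1).mul
      (hcont.comp continuousOn_snd fun _ hp ↦ hp.2), fun t ht ↦ ⟨?_, ?_, ?_⟩,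
    fun s hs ↦ ⟨?_, ?_⟩, fun s hs t ht ↦ mul_nonneg (hγ.nonneg hs) (hpos t ht).le⟩
  · exact hγ.1.mul_const _
  · exact fun _ ha _ hb hab ↦ mul_lt_mul_of_pos_right (hγ.2.1 ha hb hab) (hpos t ht)
  · simp only [hγ.2.2, zero_mul]
  · exact fun _ ha _ hb hab ↦ mul_le_mul_of_nonneg_left (hanti ha hb hab) (hγ.nonneg hs)
  · simpa only [mul_zero] using hlim.const_mul (γ s)

theorem classK_const_mul {C : ℝ} (hC : 0 < C) : ClassK fun s ↦ C * s :=
  ⟨by fun_prop, (strictMono_mul_left_of_pos hC).strictMonoOn _, mul_zero C⟩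

theorem classKL_const_mul_exp_neg {C : ℝ} (hC : 0 < C) :
    ClassKL fun s t ↦ C * s * Real.exp (-t) :=
  (classK_const_mul hC).classKL_mul (by fun_prop) (fun t _ ↦ Real.exp_pos (-t))
    (fun _ _ _ _ hab ↦ Real.exp_le_exp.2 (neg_le_neg hab)) Real.tendsto_exp_neg_atTop_nhds_zero

/-- `τ` enumerates the sampling times on `[0, ∞)`; the interval between two consecutive sampling
times is at most `h`, and may be trivial. -/
structure IsSamplingSchedule (τ : ℕ → ℝ) (h : ℝ) : Prop where
  zero : τ 0 = 0
  monotone : Monotone τ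
  sub_le (i : ℕ) : τ (i + 1) - τ i ≤ h
  not_bddAbove : ¬BddAbove (range τ)

namespace IsSamplingSchedule

variable {τ : ℕ → ℝ} {h : ℝ}

theorem of_le {h' : ℝ} (hτ : IsSamplingSchedule τ h) (hh : h ≤ h') : IsSamplingSchedule τ h' :=
  { hτ with sub_le := fun i ↦ (hτ.sub_le i).trans hh }

theorem nonneg (hτ : IsSamplingSchedule τ h) (i : ℕ) : 0 ≤ τ i :=
  hτ.zero ▸ hτ.monotone i.zero_le

theorem induction_Icc (hτ : IsSamplingSchedule τ h) {P : ℝ → Prop} {T : ℝ} (zero : P 0)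
    (step : ∀ i, P (τ i) → ∀ t ∈ Icc (τ i) (τ (i + 1)), t ≤ T → P t) : ∀ t ∈ Icc 0 T, P t := by
  rintro t ⟨ht, htT⟩
  have hsample (i : ℕ) (hi : τ i ≤ T) : P (τ i) := by
    induction i with
    | zero => rwa [hτ.zero]
    | succ i ih =>
      have hle := hτ.monotone i.le_succ
      exact step i (ih (hle.trans hi)) _ (right_mem_Icc.2 hle) hi
  have hcover : t ∈ ⋃ i, Ico (τ i) (τ (i + 1)) := by
    have := iUnion_Ico_map_succ_eq_Ici (fun i ↦ hτ.monotone i.zero_le) hτ.not_bddAbove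
    exact this ▸ (hτ.zero ▸ ht : τ 0 ≤ t)
  obtain ⟨i, hi⟩ := mem_iUnion.1 hcover
  exact step i (hsample i (hi.1.trans htT)) t (Ico_subset_Icc_self hi) htT

end IsSamplingSchedule

theorem isSamplingSchedule_of_exp {τ : ℕ → ℝ} {η : ℝ → ℝ} {r : ℝ} (hr : 0 < r) (hτ₀ : τ 0 = 0)
    (hτ : ∀ i, τ (i + 1) = τ i + r * Real.exp (-η (τ i))) (hη : ∀ t, 0 ≤ η t)
    (hbdd : ∀ b, ∃ C, ∀ t ∈ Icc (0 : ℝ) b, η t ≤ C) : IsSamplingSchedule τ r := by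
  have hmono : Monotone τ := monotone_nat_of_le_succ fun i ↦ by
    rw [hτ i]
    exact le_add_of_nonneg_right (by positivity)
  refine ⟨hτ₀, hmono, fun i ↦ ?_, fun ⟨B, hB⟩ ↦ ?_⟩
  · rw [hτ i, add_sub_cancel_left]
    exact mul_le_of_le_one_right hr.le (Real.exp_le_one_iff.2 (neg_nonpos.2 (hη _)))
  obtain ⟨C, hC⟩ := hbdd B
  have hgrowth (i : ℕ) : i * (r * Real.exp (-C)) ≤ τ i := by
    induction i with
    | zero => simp [hτ₀]
    | succ i ih =>
      have hηC : η (τ i) ≤ C := hC _ ⟨hτ₀ ▸ hmono i.zero_le, hB (mem_range_self i)⟩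
      have hstep : r * Real.exp (-C) ≤ r * Real.exp (-η (τ i)) := by gcongr
      rw [hτ i]
      push_cast
      linarith
  obtain ⟨n, hn⟩ := exists_lt_nsmul (mul_pos hr (Real.exp_pos (-C))) B
  rw [nsmul_eq_mul] at hn
  exact (hn.trans_le (hgrowth n)).not_ge (hB (mem_range_self n))

section Dissipative

variable {x φ w : ℝ → ℝ} {a b k ν A S : ℝ}

theorem le_barrier_of_dissipative (hab : a ≤ b) (hk : 0 ≤ k) (hA : 0 ≤ A) (hS : 0 ≤ S)
    (hx : AbsolutelyContinuousOnInterval x a b)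
    (hode : ∀ᵐ t, t ∈ Ioo a b → HasDerivAt x (-k * x t - φ t + w t) t)
    (hφ : ∀ t, 0 ≤ x t * φ t)
    (hw : ∀ t ∈ Ioo a b, |w t| ≤ (k - ν) * (Real.exp (-ν * t) * A) + k * S)
    (ha : x a ≤ Real.exp (-ν * a) * A + S) : x b ≤ Real.exp (-ν * b) * A + S := by
  let g (t : ℝ) : ℝ := Real.exp (-ν * t) * A + S
  have hg (t : ℝ) : HasDerivAt g (Real.exp (-ν * t) * -ν * A) t :=
    (((hasDerivAt_const_mul (-ν)).exp).mul_const A).add_const S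
  refine le_of_ae_deriv_le (g := g) (K := 0) hx
    (ContDiffOn.absolutelyContinuousOnInterval (by fun_prop)) ha ?_ b (right_mem_Icc.2 hab)
  filter_upwards [hode] with t ht hmem hlt
  rw [(ht hmem).deriv, (hg t).deriv]
  have hxpos : 0 < x t := lt_of_le_of_lt (by positivity) hlt
  have hφt : 0 ≤ φ t := nonneg_of_mul_nonneg_right (hφ t) hxpos
  have hwt := (abs_le.1 (hw t hmem)).2
  have hkx : k * (Real.exp (-ν * t) * A + S) ≤ k * x t := by gcongr
  linarith

theorem abs_le_barrier_of_dissipative (hab : a ≤ b) (hk : 0 ≤ k) (hA : 0 ≤ A) (hS : 0 ≤ S)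
    (hx : AbsolutelyContinuousOnInterval x a b)
    (hode : ∀ᵐ t, t ∈ Ioo a b → HasDerivAt x (-k * x t - φ t + w t) t)
    (hφ : ∀ t, 0 ≤ x t * φ t)
    (hw : ∀ t ∈ Ioo a b, |w t| ≤ (k - ν) * (Real.exp (-ν * t) * A) + k * S)
    (ha : |x a| ≤ Real.exp (-ν * a) * A + S) : |x b| ≤ Real.exp (-ν * b) * A + S := by
  rw [abs_le'] at ha ⊢
  refine ⟨le_barrier_of_dissipative hab hk hA hS hx hode hφ hw ha.1,
    le_barrier_of_dissipative (φ := -φ) (w := -w) hab hk hA hS hx.neg ?_ (fun t ↦ ?_)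
      (fun t ht ↦ ?_) ha.2⟩
  · filter_upwards [hode] with t ht hmem
    exact (ht hmem).neg.congr_deriv (by simp only [Pi.neg_apply]; ring)
  · simpa using hφ t
  · simpa using hw t ht

end Dissipative

theorem mul_sq_sub_cube_le {d y : ℝ} (hd : d ≤ 1) (hy : 0 ≤ y) : d * y ^ 2 - y ^ 3 ≤ y / 4 := by
  have hdy : d * y ^ 2 ≤ y ^ 2 := mul_le_of_le_one_left (sq_nonneg y) hd
  linarith [mul_nonneg hy (sq_nonneg (y - 1 / 2))]

section SampledCubic

variable {y d w : ℝ → ℝ} {a b S : ℝ}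

theorem le_of_sampled_cubic (hab : a ≤ b) (hba : b - a ≤ 1 / 4) (hS : 0 ≤ S)
    (hy : AbsolutelyContinuousOnInterval y a b)
    (hode : ∀ᵐ t, t ∈ Ioo a b → HasDerivAt y (d t * y t ^ 2 - y t ^ 3 - 2 * y a + w t) t)
    (hd : ∀ t, |d t| ≤ 1) (hw : ∀ t ∈ Ioo a b, |w t| ≤ S) (ha : 0 ≤ y a) :
    y b ≤ y a + 3 / 2 * (S - y a) * (b - a) := by
  let g (t : ℝ) : ℝ := y a + 3 / 2 * (S - y a) * (t - a)
  have hg (t : ℝ) : HasDerivAt g (3 / 2 * (S - y a)) t :=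
    ((((hasDerivAt_id t).sub_const a).const_mul _).const_add _).congr_deriv (mul_one _)
  refine le_of_ae_deriv_le (g := g) (K := 1 / 4) hy
    (ContDiffOn.absolutelyContinuousOnInterval (by fun_prop)) (by simp [g]) ?_ b
    (right_mem_Icc.2 hab)
  filter_upwards [hode] with t ht hmem hlt
  rw [(ht hmem).deriv, (hg t).deriv]
  have hta : 0 ≤ t - a := sub_nonneg.2 hmem.1.le
  have htb : t - a ≤ 1 / 4 := by linarith [hmem.2]
  have hyS : S * (t - a) ≤ S * (1 / 4) := by gcongr
  have hya : y a * (t - a) ≤ y a * (1 / 4) := by gcongr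
  have hpos : 0 ≤ y t := by
    dsimp only [g] at hlt
    linarith [mul_nonneg hS hta]
  have hcubic := mul_sq_sub_cube_le (abs_le.1 (hd t)).2 hpos
  have hwt := (abs_le.1 (hw t hmem)).2
  dsimp only [g]
  linarith [mul_nonneg ha hta]

theorem neg_le_of_sampled_cubic (hab : a ≤ b) (hba : b - a ≤ 1 / 4) (hS : 0 ≤ S)
    (hy : AbsolutelyContinuousOnInterval y a b)
    (hode : ∀ᵐ t, t ∈ Ioo a b → HasDerivAt y (d t * y t ^ 2 - y t ^ 3 - 2 * y a + w t) t)
    (hd : ∀ t, |d t| ≤ 1) (hw : ∀ t ∈ Ioo a b, |w t| ≤ S) (ha : 0 ≤ y a) :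
    -y b ≤ (5 / 2 * y a + 3 / 2 * S) * (b - a) := by
  let g (t : ℝ) : ℝ := (5 / 2 * y a + 3 / 2 * S) * (t - a)
  have hg (t : ℝ) : HasDerivAt g (5 / 2 * y a + 3 / 2 * S) t :=
    (((hasDerivAt_id t).sub_const a).const_mul _).congr_deriv (mul_one _)
  refine le_of_ae_deriv_le (f := -y) (g := g) (K := 1 / 4) hy.neg
    (ContDiffOn.absolutelyContinuousOnInterval (by fun_prop)) (by simpa [g]) ?_ b
    (right_mem_Icc.2 hab)
  filter_upwards [hode] with t ht hmem hlt
  rw [(ht hmem).neg.deriv, (hg t).deriv]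
  have hta : 0 ≤ t - a := sub_nonneg.2 hmem.1.le
  have htb : t - a ≤ 1 / 4 := by linarith [hmem.2]
  have hyS : S * (t - a) ≤ S * (1 / 4) := by gcongr
  have hya : y a * (t - a) ≤ y a * (1 / 4) := by gcongr
  have hpos : 0 ≤ -y t := le_trans (by dsimp only [g]; positivity) hlt.le
  have hcubic := mul_sq_sub_cube_le (neg_le.1 (abs_le.1 (hd t)).1) hpos
  have hwt := (abs_le.1 (hw t hmem)).1
  dsimp only [g, Pi.neg_apply]
  linarith

theorem abs_le_of_sampled_cubic_of_nonneg (hab : a ≤ b) (hba : b - a ≤ 1 / 4) (hS : 0 ≤ S)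
    (hy : AbsolutelyContinuousOnInterval y a b)
    (hode : ∀ᵐ t, t ∈ Ioo a b → HasDerivAt y (d t * y t ^ 2 - y t ^ 3 - 2 * y a + w t) t)
    (hd : ∀ t, |d t| ≤ 1) (hw : ∀ t ∈ Ioo a b, |w t| ≤ S) (ha : 0 ≤ y a) :
    |y b| ≤ y a + 3 / 2 * (S - y a) * (b - a) := by
  refine abs_le'.2 ⟨le_of_sampled_cubic hab hba hS hy hode hd hw ha, ?_⟩
  have hlower := neg_le_of_sampled_cubic hab hba hS hy hode hd hw ha
  -- The two barriers match because `5 / 2 * h ≤ 1 - 3 / 2 * h` for `h ≤ 1 / 4`.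
  have : y a * (b - a) ≤ y a * (1 / 4) := by gcongr
  linarith

theorem abs_le_of_sampled_cubic (hab : a ≤ b) (hba : b - a ≤ 1 / 4) (hS : 0 ≤ S)
    (hy : AbsolutelyContinuousOnInterval y a b)
    (hode : ∀ᵐ t, t ∈ Ioo a b → HasDerivAt y (d t * y t ^ 2 - y t ^ 3 - 2 * y a + w t) t)
    (hd : ∀ t, |d t| ≤ 1) (hw : ∀ t ∈ Ioo a b, |w t| ≤ S) :
    |y b| ≤ |y a| + 3 / 2 * (S - |y a|) * (b - a) := by
  rcases le_total 0 (y a) with ha | ha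
  · rw [abs_of_nonneg ha]
    exact abs_le_of_sampled_cubic_of_nonneg hab hba hS hy hode hd hw ha
  · have hode_neg : ∀ᵐ t, t ∈ Ioo a b → HasDerivAt (-y)
        ((-d) t * (-y) t ^ 2 - (-y) t ^ 3 - 2 * (-y) a + (-w) t) t := by
      filter_upwards [hode] with t ht hmem
      exact (ht hmem).neg.congr_deriv (by simp only [Pi.neg_apply]; ring)
    rw [abs_of_nonpos ha, ← abs_neg]
    exact abs_le_of_sampled_cubic_of_nonneg hab hba hS hy.neg hode_neg (by simpa using hd)
      (by simpa using hw) (neg_nonneg.2 ha)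

end SampledCubic

theorem sqrt_sq_add_sq_le_abs_add_abs (p q : ℝ) : √(p ^ 2 + q ^ 2) ≤ |p| + |q| := by
  rw [← sq_abs p, ← sq_abs q]
  refine Real.sqrt_le_iff.2 ⟨by positivity, ?_⟩
  linarith [mul_nonneg (abs_nonneg p) (abs_nonneg q)]

section SampledSystem

variable {x₁ x₂ d₁ d₂ v : ℝ → ℝ} {τ : ℕ → ℝ} {S T : ℝ}

theorem IsSamplingSchedule.abs_le_exp_of_sampled_cubic (hτ : IsSamplingSchedule τ (1 / 4))
    (hac : ∀ i, AbsContOn x₂ (τ i) (τ (i + 1)))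
    (hode : ∀ i, ∀ᵐ t, t ∈ Ico (τ i) (τ (i + 1)) →
      HasDerivAt x₂ (d₂ t * x₂ t ^ 2 - x₂ t ^ 3 - 2 * x₂ (τ i) + v t) t)
    (hd₂ : ∀ t, |d₂ t| ≤ 1) (hS : 0 ≤ S) (hv : ∀ t ∈ Icc 0 T, |v t| ≤ S) :
    ∀ t ∈ Icc 0 T, |x₂ t| ≤ Real.exp (-t) * |x₂ 0| + S := by
  refine hτ.induction_Icc (by simpa using hS) fun i ih t ht htT ↦ ?_
  have hac_t := ((hac i).mono le_rfl ht.2).absolutelyContinuousOnInterval ht.1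
  have hs₀ : 0 ≤ t - τ i := sub_nonneg.2 ht.1
  have hs₁ : t - τ i ≤ 1 / 4 := by linarith [hτ.sub_le i, ht.2]
  have hstep := abs_le_of_sampled_cubic ht.1 hs₁ hS hac_t
    ((hode i).mono fun s hs hmem ↦ hs ⟨hmem.1.le, hmem.2.trans_le ht.2⟩) hd₂
    fun s hs ↦ hv s ⟨(hτ.nonneg i).trans hs.1.le, hs.2.le.trans htT⟩
  have hexp : 1 - 3 / 2 * (t - τ i) ≤ Real.exp (-(t - τ i)) := by
    linarith [Real.add_one_le_exp (-(t - τ i))]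
  calc |x₂ t| ≤ (1 - 3 / 2 * (t - τ i)) * |x₂ (τ i)| + 3 / 2 * (t - τ i) * S := by linarith
    _ ≤ (1 - 3 / 2 * (t - τ i)) * (Real.exp (-τ i) * |x₂ 0| + S) + 3 / 2 * (t - τ i) * S := by
      gcongr
      linarith
    _ = (1 - 3 / 2 * (t - τ i)) * (Real.exp (-τ i) * |x₂ 0|) + S := by ring
    _ ≤ Real.exp (-(t - τ i)) * (Real.exp (-τ i) * |x₂ 0|) + S := by gcongr
    _ = Real.exp (-t) * |x₂ 0| + S := by
      rw [← mul_assoc, ← Real.exp_add]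
      ring_nf

theorem IsSamplingSchedule.abs_le_exp_of_dissipative {h k ν A : ℝ} {x φ w : ℝ → ℝ}
    (hτ : IsSamplingSchedule τ h) (hk : 0 ≤ k) (hA : 0 ≤ A) (hS : 0 ≤ S)
    (hac : ∀ i, AbsContOn x (τ i) (τ (i + 1)))
    (hode : ∀ i, ∀ᵐ t, t ∈ Ico (τ i) (τ (i + 1)) → HasDerivAt x (-k * x t - φ t + w t) t)
    (hφ : ∀ t, 0 ≤ x t * φ t)
    (hw : ∀ t ∈ Icc 0 T, |w t| ≤ (k - ν) * (Real.exp (-ν * t) * A) + k * S)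
    (h₀ : |x 0| ≤ A + S) : ∀ t ∈ Icc 0 T, |x t| ≤ Real.exp (-ν * t) * A + S := by
  refine hτ.induction_Icc (by simpa using h₀) fun i ih t ht htT ↦ ?_
  have hac_t := ((hac i).mono le_rfl ht.2).absolutelyContinuousOnInterval ht.1
  exact abs_le_barrier_of_dissipative ht.1 hk hA hS hac_t
    ((hode i).mono fun s hs hmem ↦ hs ⟨hmem.1.le, hmem.2.trans_le ht.2⟩) hφ
    (fun s hs ↦ hw s ⟨(hτ.nonneg i).trans hs.1.le, hs.2.le.trans htT⟩) ih

theorem sqrt_le_exp_of_sampled (hτ : IsSamplingSchedule τ (1 / 4))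
    (hac : ∀ i, AbsContOn (fun t ↦ (x₁ t, x₂ t)) (τ i) (τ (i + 1)))
    (hode : ∀ i, ∀ᵐ t, t ∈ Ico (τ i) (τ (i + 1)) →
      HasDerivAt x₁ (-2 * x₁ t - d₁ t * x₁ t ^ 3 + x₂ t) t ∧
      HasDerivAt x₂ (d₂ t * x₂ t ^ 2 - x₂ t ^ 3 - 2 * x₂ (τ i) + v t) t)
    (hd₁ : ∀ t, 0 ≤ d₁ t) (hd₂ : ∀ t, |d₂ t| ≤ 1) (hT : 0 ≤ T) (hv : ∀ t ∈ Icc 0 T, |v t| ≤ S) :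
    √(x₁ T ^ 2 + x₂ T ^ 2) ≤ 3 * √(x₁ 0 ^ 2 + x₂ 0 ^ 2) * Real.exp (-T) + 3 / 2 * S := by
  have hS : 0 ≤ S := (abs_nonneg _).trans (hv 0 (left_mem_Icc.2 hT))
  have hx₂ := hτ.abs_le_exp_of_sampled_cubic (fun i ↦ (hac i).snd)
    (fun i ↦ (hode i).mono fun t ht hmem ↦ (ht hmem).2) hd₂ hS hv
  have hx₁ : ∀ t ∈ Icc 0 T, |x₁ t| ≤ Real.exp (-1 * t) * (|x₁ 0| + |x₂ 0|) + S / 2 := by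
    refine hτ.abs_le_exp_of_dissipative (φ := fun t ↦ d₁ t * x₁ t ^ 3) zero_le_two (by positivity)
      (by positivity) (fun i ↦ (hac i).fst) (fun i ↦ (hode i).mono fun t ht hmem ↦ (ht hmem).1)
      (fun t ↦ ?_) (fun t ht ↦ ?_) (by linarith [abs_nonneg (x₂ 0)])
    · have := mul_nonneg (hd₁ t) ((Even.pow_nonneg (n := 4) (by decide)) (x₁ t))
      linarith
    · have := mul_nonneg (Real.exp_pos (-t)).le (abs_nonneg (x₁ 0))
      rw [neg_one_mul]
      linarith [hx₂ t ht]
  have h₁ : |x₁ 0| ≤ √(x₁ 0 ^ 2 + x₂ 0 ^ 2) := Real.abs_le_sqrt (by linarith [sq_nonneg (x₂ 0)])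
  have h₂ : |x₂ 0| ≤ √(x₁ 0 ^ 2 + x₂ 0 ^ 2) := Real.abs_le_sqrt (by linarith [sq_nonneg (x₁ 0)])
  have hT' := right_mem_Icc.2 hT
  calc √(x₁ T ^ 2 + x₂ T ^ 2) ≤ |x₁ T| + |x₂ T| :=
        sqrt_sq_add_sq_le_abs_add_abs _ _
    _ ≤ (|x₁ 0| + 2 * |x₂ 0|) * Real.exp (-T) + 3 / 2 * S := by
      have := hx₁ T hT'
      rw [neg_one_mul] at this
      linarith [hx₂ T hT']
    _ ≤ 3 * √(x₁ 0 ^ 2 + x₂ 0 ^ 2) * Real.exp (-T) + 3 / 2 * S := by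
      gcongr
      linarith

end SampledSystem

theorem stmt_12_general :
    ∃ σ : ℝ → ℝ → ℝ, ClassKL σ ∧
      ∀ (x₁ x₂ d₁ d₂ v : ℝ → ℝ) (τ : ℕ → ℝ), IsSamplingSchedule τ (1 / 4) →
        (∀ t, 0 ≤ d₁ t) → (∀ t, |d₂ t| ≤ 1) →
        (∀ b : ℝ, ∃ C, ∀ t ∈ Icc (0 : ℝ) b, |v t| ≤ C) →
        (∀ i, AbsContOn (fun t ↦ (x₁ t, x₂ t)) (τ i) (τ (i + 1))) →
        (∀ i, ∀ᵐ t, t ∈ Ico (τ i) (τ (i + 1)) →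
          HasDerivAt x₁ (-2 * x₁ t - d₁ t * x₁ t ^ 3 + x₂ t) t ∧
          HasDerivAt x₂ (d₂ t * x₂ t ^ 2 - x₂ t ^ 3 - 2 * x₂ (τ i) + v t) t) →
        ∀ t ≥ (0 : ℝ), √(x₁ t ^ 2 + x₂ t ^ 2) ≤
          σ √(x₁ 0 ^ 2 + x₂ 0 ^ 2) t + 2 * sSup ((fun s ↦ |v s|) '' Icc 0 t) := by
  refine ⟨_, classKL_const_mul_exp_neg three_pos,
    fun x₁ x₂ d₁ d₂ v τ hτ hd₁ hd₂ hv hac hode T hT ↦ ?_⟩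
  have hbdd : BddAbove ((fun s ↦ |v s|) '' Icc 0 T) :=
    (hv T).imp fun C hC ↦ forall_mem_image.2 hC
  have hvS : ∀ t ∈ Icc 0 T, |v t| ≤ sSup ((fun s ↦ |v s|) '' Icc 0 T) :=
    fun t ht ↦ le_csSup hbdd (mem_image_of_mem _ ht)
  have hS := (abs_nonneg _).trans (hvS 0 (left_mem_Icc.2 hT))
  linarith [sqrt_le_exp_of_sampled hτ hac hode hd₁ hd₂ hT hvS]

/-- UISS conclusion of Example 4.1 via the single Lyapunov function
`V(x) = x₁²/2 + x₂²/2`: for constants `c > 1`, `δ > 0`, `Δ ≥ δ`, `r > 0` with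
`r < 7/(40c² + 8)` and `r ≤ c⁻³·min{1/11, δ/5}`, there is a `KL` function `σ`
(depending only on the constants) such that every solution of the sampled-data system
(4.2) satisfies `|x(t)| ≤ σ(|x₀|, t) + 2 · sup_{0 ≤ τ ≤ t} |v(τ)|` for all `t ≥ 0`. -/
theorem stmt_12 (r δ Δ c : ℝ) (hc : 1 < c) (hδ : 0 < δ) (hΔ : δ ≤ Δ) (hr : 0 < r)
    (hr1 : r < 7 / (40 * c ^ 2 + 8)) (hr2 : r ≤ c⁻¹ ^ 3 * min (1 / 11) (δ / 5)) :
    ∃ σ : ℝ → ℝ → ℝ, ClassKL σ ∧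
      ∀ (x₁ x₂ d₁ d₂ dd v : ℝ → ℝ) (τ : ℕ → ℝ),
        Measurable d₁ → Measurable d₂ → Measurable dd → Measurable v →
        (∀ t, d₁ t ∈ Set.Icc δ Δ) → (∀ t, d₂ t ∈ Set.Icc (-1 : ℝ) 1) →
        (∀ t, 0 ≤ dd t) →
        (∀ b : ℝ, ∃ C, ∀ t ∈ Set.Icc (0:ℝ) b, dd t ≤ C) →
        (∀ b : ℝ, ∃ C, ∀ t ∈ Set.Icc (0:ℝ) b, |v t| ≤ C) →
        τ 0 = 0 →
        (∀ i : ℕ, τ (i + 1) = τ i + r * Real.exp (-(dd (τ i)))) →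
        (∀ i : ℕ, AbsContOn (fun t => (x₁ t, x₂ t)) (τ i) (τ (i + 1))) →
        (∀ i : ℕ, ∀ᵐ t ∂MeasureTheory.volume, t ∈ Set.Ico (τ i) (τ (i + 1)) →
          HasDerivAt x₁ (-2 * x₁ t - d₁ t * x₁ t ^ 3 + x₂ t) t ∧
          HasDerivAt x₂ (d₂ t * x₂ t ^ 2 - x₂ t ^ 3 - 2 * x₂ (τ i) + v t) t) →
        ∀ t ≥ (0:ℝ),
          Real.sqrt (x₁ t ^ 2 + x₂ t ^ 2) ≤
            σ (Real.sqrt (x₁ 0 ^ 2 + x₂ 0 ^ 2)) t +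
              2 * sSup ((fun s => |v s|) '' Set.Icc 0 t) := by
  have hr_le : r ≤ 1 / 4 := hr1.le.trans (by rw [div_le_div_iff₀] <;> nlinarith)
  obtain ⟨σ, hσ, h⟩ := stmt_12_general
  exact ⟨σ, hσ, fun x₁ x₂ d₁ d₂ dd v τ _ _ _ _ hd₁ hd₂ hdd hddb hv hτ₀ hτ ↦
    h x₁ x₂ d₁ d₂ v τ ((isSamplingSchedule_of_exp hr hτ₀ hτ hdd hddb).of_le hr_le)
      (fun t ↦ hδ.le.trans (hd₁ t).1) (fun t ↦ abs_le.2 (hd₂ t)) hv⟩
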